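/- Let N ∈ ℕ and C > 0, and for each j ∈ ℕ let a_j(y) = Σ_{m=0}^N a_{j,m}·e^{−2πi m y} be a trigonometric polynomial of degree at most N with a_j(0) = 1 and sup_{y∈ℝ}|a_j(y)| ≤ C. Let φ : ℝ → ℂ be continuous, integrable and compactly supported with φ̂(z) = Π_{j=1}^∞ a_j(2^{−j} z) for all z ∈ ℂ (pointwise limit of partial products). Let α ∈ ℂ, d ∈ ℕ₀ with d ≤ N, and suppose there exist C' > 0 and q ∈ (0,1) such that |φ̂^{(k)}(α + ℓ)| ≤ C'·q^{|ℓ|} for all ℓ ∈ ℤ and k = 0, …, d. Then the set { (k,ℓ) : 0 ≤ k ≤ d, ℓ ∈ ℤ, φ̂^{(k)}(α + ℓ) ≠ 0 } contains at most N elements. -/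

import Mathlib

open MeasureTheory

/-- The Fourier transform of `φ`, analytically extended to `ℂ`:
`φ̂(z) = ∫_ℝ φ(x)·e^{−2πi x z} dx`. -/
noncomputable def fourierExt (φ : ℝ → ℂ) (z : ℂ) : ℂ :=
  ∫ x : ℝ, φ x * Complex.exp (-(2 * (Real.pi : ℂ) * Complex.I * (x : ℂ) * z))

/-!
Let `V_j` be the space of combinations of the translates of `φ` by `2⁻ʲℤ`. By the infinite product,
integrating `φ` against a test function is a limit of correlations with cascades of the masks `a_j`;
for test functions supported in an interval of length `2⁻ʲ`, only `N` linear functionals of the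
coefficients of a function in `V_j` enter these correlations. An analytic function vanishing on an
interval is zero, so the analytic functions in `V_j` form a space of dimension at most `N`,
invariant under translation by `2⁻ʲ`.

Exponential decay of `φ̂^{(k)}(α + ℓ)` makes the twisted moments
`x ↦ ∑_n n^k e^{-2πiαn} φ(x + n)` analytic for `k ≤ d`, and they lie in every `V_j`. So a polynomial
`χ` of degree at most `N` in the translation by `2⁻ʲ` annihilates them all. On the Fourier side,
`χ(e^{2πi2⁻ʲz}) φ̂(z)` vanishes to order greater than `d` at every `α + ℓ`: whenever
`φ̂^{(k)}(α + ℓ) ≠ 0`, the point `e^{2πi2⁻ʲ(α + ℓ)}` is a root of `χ` of multiplicity greater than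
`d - k`. For `j` large the points belonging to finitely many `ℓ` are distinct, and counting the
roots of `χ` bounds the number of pairs `(k, ℓ)` by `N`.
-/

section Character

/-- The entire function `z ↦ e^{2πiz}`, extending `Real.fourierChar` to the complex plane. -/
noncomputable def fourierCharExt (z : ℂ) : ℂ :=
  Complex.exp (2 * Real.pi * Complex.I * z)

@[simp]
lemma fourierCharExt_zero : fourierCharExt 0 = 1 := by
  simp [fourierCharExt]

lemma fourierCharExt_ne_zero (z : ℂ) : fourierCharExt z ≠ 0 :=
  Complex.exp_ne_zero _

lemma fourierCharExt_add (z w : ℂ) :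
    fourierCharExt (z + w) = fourierCharExt z * fourierCharExt w := by
  rw [fourierCharExt, mul_add, Complex.exp_add, fourierCharExt, fourierCharExt]

lemma fourierCharExt_nat_mul (n : ℕ) (z : ℂ) :
    fourierCharExt (n * z) = fourierCharExt z ^ n := by
  rw [fourierCharExt, fourierCharExt, ← Complex.exp_nat_mul]
  ring_nf

lemma fourierCharExt_ofReal (x : ℝ) : fourierCharExt x = Real.fourierChar x := by
  rw [fourierCharExt, Real.fourierChar_apply]
  push_cast
  ring_nf

lemma norm_fourierCharExt_ofReal (x : ℝ) : ‖fourierCharExt x‖ = 1 := by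
  rw [fourierCharExt_ofReal, Circle.norm_coe]

lemma hasDerivAt_fourierCharExt (z : ℂ) :
    HasDerivAt fourierCharExt (2 * Real.pi * Complex.I * fourierCharExt z) z := by
  refine ((hasDerivAt_id z).const_mul (2 * Real.pi * Complex.I)).cexp.congr_deriv ?_
  rw [fourierCharExt, id, mul_one, mul_comm]

@[fun_prop]
lemma differentiable_fourierCharExt : Differentiable ℂ fourierCharExt :=
  fun z => (hasDerivAt_fourierCharExt z).differentiableAt

@[fun_prop]
lemma continuous_fourierCharExt : Continuous fourierCharExt :=
  differentiable_fourierCharExt.continuous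

lemma norm_fourierCharExt_sub_one_le (x : ℝ) : ‖fourierCharExt x - 1‖ ≤ 2 * Real.pi * |x| := by
  have h := Real.norm_exp_I_mul_ofReal_sub_one_le (x := 2 * Real.pi * x)
  rw [Real.norm_eq_abs, abs_mul, abs_of_pos Real.two_pi_pos] at h
  rw [fourierCharExt]
  convert h using 4
  push_cast
  ring

lemma exists_int_eq_of_fourierCharExt_eq {z w : ℂ} (h : fourierCharExt z = fourierCharExt w) :
    ∃ n : ℤ, z = w + n := by
  obtain ⟨n, hn⟩ := Complex.exp_eq_exp_iff_exists_int.1 h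
  exact ⟨n, mul_left_cancel₀ Complex.two_pi_I_ne_zero (by linear_combination hn)⟩

end Character

section Growth

open Polynomial

lemma iteratedDeriv_polynomial_eval (p : ℂ[X]) (n : ℕ) :
    iteratedDeriv n (fun z => p.eval z) = fun z => (derivative^[n] p).eval z := by
  induction n generalizing p with
  | zero => simp
  | succ n ih =>
    rw [iteratedDeriv_succ', Function.iterate_succ_apply, ← ih]
    exact congrArg _ (funext fun z => p.deriv)

lemma norm_coeff_le_of_norm_eval_le {p : ℂ[X]} {C : ℝ} (hC : ∀ z : ℂ, ‖z‖ = 1 → ‖p.eval z‖ ≤ C)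
    (n : ℕ) : ‖p.coeff n‖ ≤ C := by
  have cauchy := Complex.norm_iteratedDeriv_le_of_forall_mem_sphere_norm_le (f := fun z => p.eval z)
    (c := 0) n one_pos p.differentiable.diffContOnCl fun z hz => hC z (by simpa using hz)
  have coeff_eq : iteratedDeriv n (fun z => p.eval z) 0 = n.factorial * p.coeff n := by
    rw [iteratedDeriv_polynomial_eval]
    simp [← coeff_zero_eq_eval_zero, coeff_iterate_derivative, Nat.descFactorial_self]
  rw [coeff_eq, norm_mul, Complex.norm_natCast, one_pow, div_one] at cauchy
  exact le_of_mul_le_mul_left cauchy (by positivity)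

lemma norm_eval_fourierCharExt_sub_eval_one_le {p : ℂ[X]} {N : ℕ} (hN : p.natDegree ≤ N) {C : ℝ}
    (hC : ∀ z : ℂ, ‖z‖ = 1 → ‖p.eval z‖ ≤ C) (x : ℝ) :
    ‖p.eval (fourierCharExt x) - p.eval 1‖ ≤
      (∑ m ∈ Finset.range (N + 1), C * (2 * Real.pi * m)) * |x| := by
  rw [eval_eq_sum_range' (Nat.lt_succ_of_le hN), eval_eq_sum_range' (Nat.lt_succ_of_le hN),
    ← Finset.sum_sub_distrib, Finset.sum_mul]
  refine norm_sum_le_of_le _ fun m _ => ?_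
  have hm : ‖fourierCharExt x ^ m - 1‖ ≤ 2 * Real.pi * m * |x| := by
    have := norm_fourierCharExt_sub_one_le (m * x)
    rwa [abs_mul, Nat.abs_cast, ← mul_assoc, Complex.ofReal_mul, Complex.ofReal_natCast,
      fourierCharExt_nat_mul] at this
  have hcoeff := norm_coeff_le_of_norm_eval_le hC m
  calc ‖p.coeff m * fourierCharExt x ^ m - p.coeff m * 1 ^ m‖
      = ‖p.coeff m‖ * ‖fourierCharExt x ^ m - 1‖ := by rw [one_pow, ← mul_sub, norm_mul]
    _ ≤ C * (2 * Real.pi * m * |x|) :=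
      mul_le_mul hcoeff hm (norm_nonneg _) ((norm_nonneg _).trans hcoeff)
    _ = C * (2 * Real.pi * m) * |x| := (mul_assoc _ _ _).symm

lemma prod_range_le_exp {b : ℕ → ℝ} (hb : ∀ i, 0 ≤ b i) {K : ℝ} (hK : 0 ≤ K)
    (hbK : ∀ i, b i ≤ 1 + K / 2 ^ (i + 1)) (J : ℕ) :
    ∏ i ∈ Finset.range J, b i ≤ Real.exp K := by
  have geometric : ∑ i ∈ Finset.range J, K / 2 ^ (i + 1) ≤ K := by
    calc ∑ i ∈ Finset.range J, K / 2 ^ (i + 1)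
        = K / 2 * ∑ i ∈ Finset.range J, (1 / 2 : ℝ) ^ i := by
          rw [Finset.mul_sum]
          exact Finset.sum_congr rfl fun i _ => by rw [one_div, inv_pow, pow_succ']; field_simp
      _ ≤ K / 2 * 2 := by gcongr; exact sum_geometric_two_le J
      _ = K := by ring
  calc ∏ i ∈ Finset.range J, b i
      ≤ ∏ i ∈ Finset.range J, (1 + K / 2 ^ (i + 1)) :=
        Finset.prod_le_prod (fun i _ => hb i) fun i _ => hbK i
    _ ≤ Real.exp (∑ i ∈ Finset.range J, K / 2 ^ (i + 1)) :=
        Real.prod_one_add_le_exp_sum _ fun i => by positivity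
    _ ≤ Real.exp K := Real.exp_le_exp.2 geometric

lemma prod_range_le_pow_mul_exp {C K : ℝ} (hC : 1 ≤ C) (hK : 0 ≤ K) (p : ℕ) {b : ℕ → ℝ}
    (hb : ∀ i, 0 ≤ b i) (hbC : ∀ i, b i ≤ C) (hbK : ∀ i, b i ≤ 1 + K * 2 ^ p / 2 ^ (i + 1))
    (J : ℕ) : ∏ i ∈ Finset.range J, b i ≤ C ^ p * Real.exp K := by
  induction p generalizing b J with
  | zero => simpa using prod_range_le_exp hb hK (by simpa using hbK) J
  | succ p ih =>
    cases J with
    | zero =>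
      simpa using one_le_mul_of_one_le_of_one_le (one_le_pow₀ hC) (Real.one_le_exp hK)
    | succ J =>
      have hbK' (i : ℕ) : b (i + 1) ≤ 1 + K * 2 ^ p / 2 ^ (i + 1) := by
        refine (hbK (i + 1)).trans_eq ?_
        rw [pow_succ 2 p, pow_succ 2 (i + 1)]
        field_simp
      calc ∏ i ∈ Finset.range (J + 1), b i
          = (∏ i ∈ Finset.range J, b (i + 1)) * b 0 := Finset.prod_range_succ' _ _
        _ ≤ C ^ p * Real.exp K * C :=
          mul_le_mul (ih (fun i => hb _) (fun i => hbC _) hbK' J) (hbC 0) (hb 0) (by positivity)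
        _ = C ^ (p + 1) * Real.exp K := by ring

lemma exists_norm_prod_eval_fourierCharExt_le {p : ℕ → ℂ[X]} {N : ℕ}
    (hN : ∀ i, (p i).natDegree ≤ N) {C : ℝ} (hC : ∀ i, ∀ z : ℂ, ‖z‖ = 1 → ‖(p i).eval z‖ ≤ C)
    (hone : ∀ i, (p i).eval 1 = 1) :
    ∃ (M : ℝ) (r : ℕ), ∀ (J : ℕ) (x : ℝ),
      ‖∏ i ∈ Finset.range J, (p i).eval (fourierCharExt (x / 2 ^ (i + 1)))‖ ≤
        M * (1 + |x| ^ r) := by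
  have one_le_C : 1 ≤ C := by simpa [hone] using hC 0 1 norm_one
  obtain ⟨r, hr⟩ := pow_unbounded_of_one_lt C one_lt_two
  set K := ∑ m ∈ Finset.range (N + 1), C * (2 * Real.pi * m)
  have K_nonneg : 0 ≤ K := Finset.sum_nonneg fun m _ => by positivity
  refine ⟨Real.exp K * 2 ^ r * 2 ^ (r - 1), r, fun J x => ?_⟩
  obtain ⟨s, hs, hs'⟩ := exists_nat_pow_near (x := 1 + |x|) (by simp) one_lt_two
  have cast_eq (i : ℕ) : (x / 2 ^ (i + 1) : ℂ) = ((x / 2 ^ (i + 1) : ℝ) : ℂ) := by push_cast; rfl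
  have near_one (i : ℕ) : ‖(p i).eval (fourierCharExt (x / 2 ^ (i + 1)))‖ ≤
      1 + K * 2 ^ (s + 1) / 2 ^ (i + 1) := by
    have h := norm_eval_fourierCharExt_sub_eval_one_le (hN i) (hC i) (x / 2 ^ (i + 1))
    rw [hone, abs_div, abs_of_pos (show (0 : ℝ) < 2 ^ (i + 1) by positivity), ← mul_div_assoc] at h
    rw [cast_eq]
    refine norm_le_norm_add_norm_sub' _ (1 : ℂ) |>.trans ?_
    rw [norm_one]
    gcongr
    exact h.trans (by gcongr; linarith)
  rw [norm_prod]
  calc ∏ i ∈ Finset.range J, ‖(p i).eval (fourierCharExt (x / 2 ^ (i + 1)))‖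
      ≤ C ^ (s + 1) * Real.exp K := by
        refine prod_range_le_pow_mul_exp one_le_C K_nonneg (s + 1) (fun i => norm_nonneg _)
          (fun i => hC i _ ?_) near_one J
        rw [cast_eq, norm_fourierCharExt_ofReal]
    _ ≤ (2 ^ r) ^ (s + 1) * Real.exp K := by gcongr
    _ = Real.exp K * 2 ^ r * (2 ^ s) ^ r := by ring
    _ ≤ Real.exp K * 2 ^ r * (1 + |x|) ^ r := by gcongr
    _ ≤ Real.exp K * 2 ^ r * (2 ^ (r - 1) * (1 ^ r + |x| ^ r)) := by
        gcongr
        exact add_pow_le zero_le_one (abs_nonneg x) r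
    _ = Real.exp K * 2 ^ r * 2 ^ (r - 1) * (1 + |x| ^ r) := by
        rw [one_pow, mul_assoc _ (2 ^ (r - 1))]

end Growth

section Cascade

open Polynomial

/-- The translation `f ↦ f (· + h)`, as an endomorphism of the space of functions `G → ℂ`. For a
polynomial `P`, the operator `aeval (translation h) P` correlates a function with the coefficients
of `P` placed at the multiples of `h`. -/
def translation {G : Type*} [AddMonoid G] (h : G) : Module.End ℂ (G → ℂ) :=
  LinearMap.funLeft ℂ ℂ (· + h)

section Translation

variable {G : Type*} [AddMonoid G] (h : G)

@[simp]
lemma translation_apply (f : G → ℂ) (x : G) : translation h f x = f (x + h) := rfl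

lemma translation_pow (n : ℕ) : translation h ^ n = translation (n • h) := by
  induction n with
  | zero => ext f x; simp
  | succ n ih =>
    ext f x
    rw [pow_succ, ih, Module.End.mul_apply, translation_apply, translation_apply,
      translation_apply, succ_nsmul, add_assoc]

lemma aeval_translation_apply (P : ℂ[X]) (f : G → ℂ) (x : G) :
    aeval (translation h) P f x =
      ∑ m ∈ Finset.range (P.natDegree + 1), P.coeff m * f (x + m • h) := by
  simp [aeval_eq_sum_range, translation_pow, LinearMap.sum_apply, Finset.sum_apply]

end Translation

lemma continuous_aeval_translation (P : ℂ[X]) (h : ℝ) {f : ℝ → ℂ} (hf : Continuous f) :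
    Continuous (aeval (translation h) P f) := by
  rw [funext (aeval_translation_apply h P f)]
  fun_prop

lemma hasCompactSupport_aeval_translation (P : ℂ[X]) (h : ℝ) {f : ℝ → ℂ}
    (hs : HasCompactSupport f) : HasCompactSupport (aeval (translation h) P f) := by
  rw [aeval_eq_sum_range, LinearMap.sum_apply]
  refine HasCompactSupport.finset_sum fun m _ => ?_
  rw [translation_pow]
  exact (hs.comp_homeomorph (Homeomorph.addRight (m • h))).mul_left (f := fun _ => P.coeff m)

/-- The polynomial `∏_{i<J} p_i(X^{2^{J-1-i}})` of the `J`-fold refinement: on the lattice `2^{-J}ℤ`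
it is the convolution of the masks `p_i`, each living on the coarser lattice `2^{-(i+1)}ℤ`. -/
noncomputable def cascade (p : ℕ → ℂ[X]) : ℕ → ℂ[X]
  | 0 => 1
  | J + 1 => expand ℂ 2 (cascade p J) * p J

lemma natDegree_cascade_add_le {p : ℕ → ℂ[X]} {N : ℕ} (hN : ∀ i, (p i).natDegree ≤ N) (J : ℕ) :
    (cascade p J).natDegree + N ≤ N * 2 ^ J := by
  induction J with
  | zero => simp [cascade]
  | succ J ih =>
    have := natDegree_mul_le (p := expand ℂ 2 (cascade p J)) (q := p J)
    rw [natDegree_expand] at this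
    have := hN J
    rw [cascade, pow_succ]
    lia

lemma eval_cascade (p : ℕ → ℂ[X]) (J : ℕ) (z : ℂ) :
    (cascade p J).eval (fourierCharExt (z / 2 ^ J)) =
      ∏ i ∈ Finset.range J, (p i).eval (fourierCharExt (z / 2 ^ (i + 1))) := by
  induction J with
  | zero => simp [cascade]
  | succ J ih =>
    have halve : fourierCharExt (z / 2 ^ (J + 1)) ^ 2 = fourierCharExt (z / 2 ^ J) := by
      rw [← fourierCharExt_nat_mul]
      congr 1
      push_cast
      ring
    rw [cascade, eval_mul, expand_eval, halve, ih, Finset.prod_range_succ]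

lemma cascade_add (p : ℕ → ℂ[X]) (j J : ℕ) :
    cascade p (j + J) = expand ℂ (2 ^ J) (cascade p j) * cascade (fun i => p (j + i)) J := by
  induction J with
  | zero => simp [cascade]
  | succ J ih =>
    rw [← add_assoc, cascade, ih, map_mul, expand_expand, ← pow_succ', mul_assoc, cascade]

lemma aeval_translation_cascade_add (p : ℕ → ℂ[X]) (j J : ℕ) :
    aeval (translation (1 / 2 ^ (j + J) : ℝ)) (cascade p (j + J)) =
      aeval (translation (1 / 2 ^ j)) (cascade p j) *
        aeval (translation (1 / 2 ^ (j + J))) (cascade (fun i => p (j + i)) J) := by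
  have coarsen : translation (1 / 2 ^ (j + J) : ℝ) ^ 2 ^ J = translation (1 / 2 ^ j) := by
    rw [translation_pow, nsmul_eq_mul]
    congr 1
    push_cast
    rw [pow_add]
    field_simp
  rw [cascade_add, map_mul, expand_aeval, coarsen]

end Cascade

section FourierExt

open Polynomial FourierTransform

lemma fourierExt_eq_integral_mul_fourierCharExt (f : ℝ → ℂ) (z : ℂ) :
    fourierExt f z = ∫ x : ℝ, f x * fourierCharExt (-(x * z)) := by
  unfold fourierExt fourierCharExt
  congr! 4
  ring

lemma fourier_eq_fourierExt (f : ℝ → ℂ) (ξ : ℝ) : 𝓕 f ξ = fourierExt f ξ := by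
  rw [Real.fourier_real_eq, fourierExt_eq_integral_mul_fourierCharExt]
  refine integral_congr_ae (.of_forall fun x => ?_)
  simp only [Circle.smul_def, smul_eq_mul]
  rw [← fourierCharExt_ofReal, mul_comm]
  push_cast
  rfl

lemma fourierExt_const_mul (c : ℂ) (f : ℝ → ℂ) (z : ℂ) :
    fourierExt (fun x => c * f x) z = c * fourierExt f z := by
  rw [fourierExt, fourierExt, ← integral_const_mul]
  simp only [mul_assoc]

lemma fourierExt_finsetSum {ι : Type*} (s : Finset ι) {f : ι → ℝ → ℂ} {z : ℂ}
    (hf : ∀ i ∈ s, Integrable fun x : ℝ => f i x * fourierCharExt (-(x * z))) :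
    fourierExt (fun x => ∑ i ∈ s, f i x) z = ∑ i ∈ s, fourierExt (f i) z := by
  simp only [fourierExt_eq_integral_mul_fourierCharExt, Finset.sum_mul]
  exact integral_finsetSum s hf

lemma integrable_mul_fourierCharExt {g : ℝ → ℂ} (hg : Integrable g) (x : ℝ) :
    Integrable fun ξ : ℝ => g ξ * fourierCharExt (-(ξ * x)) := by
  refine hg.mul_bdd (c := 1) (by fun_prop : Continuous _).aestronglyMeasurable
    (.of_forall fun ξ => ?_)
  rw [← Complex.ofReal_mul, ← Complex.ofReal_neg, norm_fourierCharExt_ofReal]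

lemma fourierExt_modulation (g : ℝ → ℂ) (h z : ℂ) :
    fourierExt (fun ξ => fourierCharExt (-(ξ * h)) * g ξ) z = fourierExt g (z + h) := by
  simp only [fourierExt_eq_integral_mul_fourierCharExt]
  refine integral_congr_ae (.of_forall fun ξ => ?_)
  simp only
  rw [mul_add, neg_add, fourierCharExt_add]
  ring

lemma fourierExt_translation (h : ℝ) (f : ℝ → ℂ) (z : ℂ) :
    fourierExt (translation h f) z = fourierCharExt (h * z) * fourierExt f z := by
  simp only [fourierExt_eq_integral_mul_fourierCharExt, translation_apply]
  rw [← integral_add_right_eq_self (fun x : ℝ => f x * fourierCharExt (-(x * z))) h,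
    ← integral_const_mul]
  refine integral_congr_ae (.of_forall fun x => ?_)
  have : fourierCharExt (-(x * z)) =
      fourierCharExt (h * z) * fourierCharExt (-((x + h : ℝ) * z)) := by
    rw [← fourierCharExt_add]
    congr 1
    push_cast
    ring
  simp only [this]
  ring

lemma aeval_translation_fourierExt (P : ℂ[X]) (h : ℝ) {g : ℝ → ℂ} (hg : Integrable g) (x : ℝ) :
    aeval (translation h) P (fun x : ℝ => fourierExt g x) x =
      fourierExt (fun ξ => P.eval (fourierCharExt (-(ξ * h))) * g ξ) x := by
  have summand (m : ℕ) (ξ : ℝ) : P.coeff m * fourierCharExt (-(ξ * h)) ^ m * g ξ =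
      P.coeff m * (fourierCharExt (-(ξ * (m * h : ℝ))) * g ξ) := by
    rw [← fourierCharExt_nat_mul, mul_assoc]
    congr 3
    push_cast
    ring
  simp only [aeval_translation_apply, nsmul_eq_mul, eval_eq_sum_range, Finset.sum_mul, summand]
  rw [fourierExt_finsetSum]
  · simp only [fourierExt_const_mul, fourierExt_modulation, Complex.ofReal_add]
  · intro m _
    have := (integrable_mul_fourierCharExt hg (m * h)).const_mul (P.coeff m)
    refine (integrable_mul_fourierCharExt this x).congr (.of_forall fun ξ => ?_)
    simp only [mul_comm]

lemma fourierExt_aeval_translation (P : ℂ[X]) (h : ℝ) {f : ℝ → ℂ} (hf : Continuous f)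
    (hs : HasCompactSupport f) (z : ℂ) :
    fourierExt (aeval (translation h) P f) z =
      P.eval (fourierCharExt (h * z)) * fourierExt f z := by
  have aeval_eq : aeval (translation h) P f = fun x =>
      ∑ m ∈ Finset.range (P.natDegree + 1), P.coeff m * translation (m * h) f x :=
    funext fun x => by simp only [aeval_translation_apply, nsmul_eq_mul, translation_apply]
  rw [aeval_eq, fourierExt_finsetSum]
  · simp only [fourierExt_const_mul, fourierExt_translation, eval_eq_sum_range, Finset.sum_mul]
    simp only [Complex.ofReal_mul, Complex.ofReal_natCast, mul_assoc, ← fourierCharExt_nat_mul]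
  · intro m _
    have : Integrable fun x : ℝ => f (x + m * h) * fourierCharExt (-(x * z)) :=
      (by fun_prop : Continuous _).integrable_of_hasCompactSupport
        (hs.comp_homeomorph (Homeomorph.addRight (m * h))).mul_right
    simpa only [translation_apply, mul_assoc] using this.const_mul (P.coeff m)

lemma integral_mul_fourierExt_add {f g : ℝ → ℂ} (hf : Integrable f) (hg : Integrable g) (x : ℝ) :
    ∫ y : ℝ, f y * fourierExt g (x + y) =
      fourierExt (fun ξ => fourierExt f ξ * g ξ) x := by
  have hG : Integrable fun ξ : ℝ => fourierCharExt (-(ξ * x)) * g ξ := by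
    simpa only [mul_comm] using integrable_mul_fourierCharExt hg x
  have flip := VectorFourier.integral_fourierIntegral_smul_eq_flip (L := innerₗ ℝ)
    Real.continuous_fourierChar continuous_inner hf hG
  rw [flip_innerₗ] at flip
  change ∫ ξ, 𝓕 f ξ • _ = ∫ y, f y • 𝓕 (fun ξ : ℝ => fourierCharExt (-(ξ * x)) * g ξ) y at flip
  simp only [fourier_eq_fourierExt, fourierExt_modulation, smul_eq_mul] at flip
  simp only [add_comm (x : ℂ)]
  rw [← flip, fourierExt_eq_integral_mul_fourierCharExt]
  refine integral_congr_ae (.of_forall fun ξ => ?_)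
  simp only
  ring

lemma tendsto_fourierExt_mul_schwartz {m : ℕ → ℝ → ℂ} {m' : ℝ → ℂ} (hm : ∀ J, Continuous (m J))
    {M : ℝ} {r : ℕ} (hM : ∀ J ξ, ‖m J ξ‖ ≤ M * (1 + |ξ| ^ r))
    (hlim : ∀ ξ, Filter.Tendsto (fun J => m J ξ) Filter.atTop (nhds (m' ξ)))
    (g : SchwartzMap ℝ ℂ) (x : ℝ) :
    Filter.Tendsto (fun J => fourierExt (fun ξ => m J ξ * g ξ) x) Filter.atTop
      (nhds (fourierExt (fun ξ => m' ξ * g ξ) x)) := by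
  simp only [fourierExt_eq_integral_mul_fourierCharExt]
  refine tendsto_integral_of_dominated_convergence (fun ξ => M * ((1 + ‖ξ‖ ^ r) * ‖g ξ‖))
    (fun J => ?_) ?_ (fun J => .of_forall fun ξ => ?_) (.of_forall fun ξ => ?_)
  · have := hm J
    exact (by fun_prop : Continuous _).aestronglyMeasurable
  · simp only [add_mul, one_mul]
    exact (g.integrable.norm.add (g.integrable_pow_mul volume r)).const_mul M
  · rw [norm_mul, norm_mul, ← Complex.ofReal_mul, ← Complex.ofReal_neg,
      norm_fourierCharExt_ofReal, mul_one, ← mul_assoc]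
    exact mul_le_mul_of_nonneg_right (hM J ξ) (norm_nonneg _)
  · exact ((hlim ξ).mul_const _).mul_const _

lemma tendsto_aeval_translation_cascade {p : ℕ → ℂ[X]} {N : ℕ} (hN : ∀ i, (p i).natDegree ≤ N)
    {C : ℝ} (hC : ∀ i, ∀ z : ℂ, ‖z‖ = 1 → ‖(p i).eval z‖ ≤ C) (hone : ∀ i, (p i).eval 1 = 1)
    {φ : ℝ → ℂ} (hφ : Integrable φ)
    (hprod : ∀ z : ℂ, Filter.Tendsto
      (fun J => ∏ i ∈ Finset.range J, (p i).eval (fourierCharExt (-z / 2 ^ (i + 1))))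
      Filter.atTop (nhds (fourierExt φ z)))
    {ψ : ℝ → ℂ} (hψ : ContDiff ℝ (⊤ : ℕ∞) ψ) (hψs : HasCompactSupport ψ) (x : ℝ) :
    Filter.Tendsto (fun J => aeval (translation (1 / 2 ^ J)) (cascade p J) ψ x) Filter.atTop
      (nhds (∫ y, φ y * ψ (x + y))) := by
  obtain ⟨M, r, hM⟩ := exists_norm_prod_eval_fourierCharExt_le hN hC hone
  let g : SchwartzMap ℝ ℂ := 𝓕⁻ (hψs.toSchwartzMap hψ)
  have hg : ψ = fun y : ℝ => fourierExt g y := by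
    ext y
    rw [← fourier_eq_fourierExt, ← SchwartzMap.fourier_coe, FourierTransform.fourier_fourierInv_eq]
    rfl
  have partial_product (J : ℕ) (ξ : ℝ) :
      (cascade p J).eval (fourierCharExt (-(ξ * (1 / 2 ^ J : ℝ)))) =
        ∏ i ∈ Finset.range J, (p i).eval (fourierCharExt (-ξ / 2 ^ (i + 1))) := by
    rw [← eval_cascade]
    congr 2
    push_cast
    ring
  have limit := integral_mul_fourierExt_add hφ g.integrable x
  simp only [← Complex.ofReal_add, ← congrFun hg] at limit
  rw [limit]
  simp only [hg, aeval_translation_fourierExt _ _ g.integrable, partial_product]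
  refine tendsto_fourierExt_mul_schwartz (fun J => ?_) (M := M) (r := r) (fun J ξ => ?_)
    (fun ξ => hprod ξ) g x
  · exact continuous_finsetProd _ fun i _ => (p i).continuous.comp (by fun_prop)
  · simpa only [Complex.ofReal_neg, abs_neg] using hM J (-ξ)

end FourierExt

section Differentiation

open FourierTransform

lemma norm_fourierCharExt_le (z : ℂ) : ‖fourierCharExt z‖ ≤ Real.exp (2 * Real.pi * ‖z‖) := by
  refine (Complex.norm_exp_le_exp_norm _).trans_eq ?_
  simp [abs_of_pos Real.pi_pos]

lemma hasDerivAt_fourierExt {f : ℝ → ℂ} (hf : Continuous f) (hs : HasCompactSupport f) (w : ℂ) :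
    HasDerivAt (fourierExt f) (fourierExt (fun x => -(2 * Real.pi * Complex.I) * x * f x) w) w := by
  simp only [fourierExt_eq_integral_mul_fourierCharExt,
    funext (fourierExt_eq_integral_mul_fourierCharExt f)]
  refine (hasDerivAt_integral_of_dominated_loc_of_deriv_le (𝕜 := ℂ)
    (F := fun z (x : ℝ) => f x * fourierCharExt (-(x * z)))
    (F' := fun z (x : ℝ) =>
      -(2 * Real.pi * Complex.I) * x * f x * fourierCharExt (-(x * z)))
    (bound := fun x => ‖-(2 * Real.pi * Complex.I) * x * f x‖ *
      Real.exp (2 * Real.pi * (|x| * (‖w‖ + 1))))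
    (Metric.ball_mem_nhds w one_pos) (.of_forall fun z => ?_) ?_ ?_ (.of_forall fun x z hz => ?_) ?_
    (.of_forall fun x z _ => ?_)).2
  · exact (by fun_prop : Continuous _).aestronglyMeasurable
  · exact (by fun_prop : Continuous _).integrable_of_hasCompactSupport hs.mul_right
  · exact (by fun_prop : Continuous _).aestronglyMeasurable
  · have norm_z_le : ‖z‖ ≤ ‖w‖ + 1 := by
      have := norm_le_norm_add_norm_sub' z w
      rw [mem_ball_iff_norm] at hz
      linarith
    rw [norm_mul]
    gcongr
    refine (norm_fourierCharExt_le _).trans ?_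
    rw [norm_neg, norm_mul, Complex.norm_real, Real.norm_eq_abs]
    gcongr
  · exact (by fun_prop : Continuous _).integrable_of_hasCompactSupport hs.mul_left.norm.mul_right
  · refine (((hasDerivAt_fourierCharExt _).comp z
      ((hasDerivAt_id z).const_mul (x : ℂ)).neg).const_mul (f x)).congr_deriv ?_
    simp only [Pi.neg_apply, id]
    ring

lemma differentiable_fourierExt {f : ℝ → ℂ} (hf : Continuous f) (hs : HasCompactSupport f) :
    Differentiable ℂ (fourierExt f) :=
  fun w => (hasDerivAt_fourierExt hf hs w).differentiableAt

/-- The function `y ↦ y^k e^{-2πiαy} f(y)`, whose Fourier transform is, up to a constant, the `k`-th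
derivative of the transform of `f`, translated by `α`. -/
noncomputable def modulate (f : ℝ → ℂ) (α : ℂ) (k : ℕ) (y : ℝ) : ℂ :=
  y ^ k * fourierCharExt (-(α * y)) * f y

lemma continuous_modulate {f : ℝ → ℂ} (hf : Continuous f) (α : ℂ) (k : ℕ) :
    Continuous (modulate f α k) := by
  unfold modulate
  fun_prop

lemma hasCompactSupport_modulate {f : ℝ → ℂ} (hs : HasCompactSupport f) (α : ℂ) (k : ℕ) :
    HasCompactSupport (modulate f α k) :=
  hs.mul_left

lemma iteratedDeriv_fourierExt {f : ℝ → ℂ} (hf : Continuous f) (hs : HasCompactSupport f) (k : ℕ) :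
    iteratedDeriv k (fourierExt f) =
      fourierExt fun x => (-(2 * Real.pi * Complex.I) * x) ^ k * f x := by
  induction k with
  | zero => simp
  | succ k ih =>
    ext w
    have hs_k : HasCompactSupport fun x : ℝ => (-(2 * Real.pi * Complex.I) * x) ^ k * f x :=
      hs.mul_left
    rw [iteratedDeriv_succ, ih, (hasDerivAt_fourierExt (by fun_prop) hs_k w).deriv]
    congr! 2 with x
    ring

lemma iteratedDeriv_fourierExt_add {f : ℝ → ℂ} (hf : Continuous f) (hs : HasCompactSupport f)
    (k : ℕ) (α : ℂ) (ξ : ℝ) :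
    iteratedDeriv k (fourierExt f) (α + ξ) =
      (-(2 * Real.pi * Complex.I)) ^ k * 𝓕 (modulate f α k) ξ := by
  rw [iteratedDeriv_fourierExt hf hs, fourier_eq_fourierExt, add_comm, ← fourierExt_modulation,
    ← fourierExt_const_mul]
  congr! 2 with x
  rw [modulate, mul_comm α]
  ring

end Differentiation

section Dimension

open Polynomial

variable {K V W U : Type*} [Field K] [AddCommGroup V] [Module K V] [AddCommGroup W] [Module K W]
  [AddCommGroup U] [Module K U]

lemma finiteDimensional_and_finrank_le_of_forall_eq_zero [FiniteDimensional K U] (S : V →ₗ[K] W)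
    (B : V →ₗ[K] U) {E : Submodule K W} (hE : E ≤ LinearMap.range S)
    (h : ∀ v, S v ∈ E → B v = 0 → S v = 0) :
    FiniteDimensional K E ∧ Module.finrank K E ≤ Module.finrank K U := by
  let B' := B.domRestrict (E.comap S)
  let S' := S.domRestrict (E.comap S)
  have ker_le : LinearMap.ker B' ≤ LinearMap.ker S' := fun v hv => h v v.2 hv
  have range_eq : E = LinearMap.range ((LinearMap.ker B').liftQ S' ker_le) := by
    rw [Submodule.range_liftQ, LinearMap.range_domRestrict, Submodule.map_comap_eq_self hE]
  have : FiniteDimensional K (_ ⧸ LinearMap.ker B') := B'.quotKerEquivRange.symm.finiteDimensional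
  rw [range_eq]
  exact ⟨inferInstance, (LinearMap.finrank_range_le _).trans
    (B'.quotKerEquivRange.finrank_eq.trans_le (Submodule.finrank_le _))⟩

lemma exists_monic_aeval_eq_zero_of_mapsTo (T : Module.End K W) (E : Submodule K W)
    [FiniteDimensional K E] (hT : ∀ w ∈ E, T w ∈ E) :
    ∃ χ : K[X], χ.Monic ∧ χ.natDegree = Module.finrank K E ∧ ∀ w ∈ E, aeval T χ w = 0 := by
  let R : Module.End K E := T.restrict hT
  have coe_pow (n : ℕ) (w : E) : ((R ^ n) w : W) = (T ^ n) w := by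
    rw [Module.End.pow_restrict, LinearMap.coe_restrict_apply]
  have coe_aeval (P : K[X]) (w : E) : (aeval R P w : W) = aeval T P w := by
    simp only [aeval_eq_sum_range, LinearMap.sum_apply, LinearMap.smul_apply, Submodule.coe_sum,
      Submodule.coe_smul, coe_pow]
  refine ⟨R.charpoly, R.charpoly_monic, R.charpoly_natDegree, fun w hw => ?_⟩
  rw [← coe_aeval _ ⟨w, hw⟩, LinearMap.aeval_self_charpoly]
  rfl

end Dimension

section Synthesis

open Polynomial

variable {φ : ℝ → ℂ} {h : ℝ}

lemma exists_finset_forall_notMem_eq_zero (hφ : HasCompactSupport φ) (hh : h ≠ 0) {K : Set ℝ}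
    (hK : IsCompact K) : ∃ F : Finset ℤ, ∀ x ∈ K, ∀ i ∉ F, φ (x + i * h) = 0 := by
  have hcompact : IsCompact ((fun q : ℝ × ℝ => (q.1 - q.2) / h) '' (tsupport φ ×ˢ K)) :=
    (hφ.isCompact.prod hK).image (by fun_prop)
  have hfin := Filter.eventually_cofinite.1
    (Int.tendsto_coe_cofinite.eventually hcompact.compl_mem_cocompact)
  refine ⟨hfin.toFinset, fun x hx i hi => image_eq_zero_of_notMem_tsupport fun hmem => hi ?_⟩
  rw [Set.Finite.mem_toFinset, Set.mem_ofPred_eq, not_not]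
  exact ⟨(x + i * h, x), ⟨hmem, hx⟩, by field_simp; ring⟩

lemma exists_finset_forall_tsum_eq_sum (hφ : HasCompactSupport φ) (hh : h ≠ 0) {K : Set ℝ}
    (hK : IsCompact K) : ∃ F : Finset ℤ, ∀ F' : Finset ℤ, F ⊆ F' → ∀ x ∈ K, ∀ κ : ℤ → ℂ,
      ∑' i, κ i * φ (x + i * h) = ∑ i ∈ F', κ i * φ (x + i * h) := by
  obtain ⟨F, hF⟩ := exists_finset_forall_notMem_eq_zero hφ hh hK
  exact ⟨F, fun F' hFF' x hx κ => tsum_eq_sum fun i hi => by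
    rw [hF x hx i fun hiF => hi (hFF' hiF), mul_zero]⟩

lemma summable_mul_shift (hφ : HasCompactSupport φ) (hh : h ≠ 0) (κ : ℤ → ℂ) (x : ℝ) :
    Summable fun i : ℤ => κ i * φ (x + i * h) := by
  obtain ⟨F, hF⟩ := exists_finset_forall_notMem_eq_zero hφ hh (isCompact_singleton (x := x))
  exact summable_of_ne_finset_zero (s := F) fun i hi => by rw [hF x rfl i hi, mul_zero]

/-- The synthesis operator of the shift-invariant space generated by `φ` on the lattice `hℤ`: it
sends `κ` to `∑ i, κ i * φ (· + i * h)`, for arbitrary coefficients `κ`. -/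
noncomputable def synthesis (hφ : HasCompactSupport φ) (hh : h ≠ 0) :
    (ℤ → ℂ) →ₗ[ℂ] (ℝ → ℂ) where
  toFun κ x := ∑' i, κ i * φ (x + i * h)
  map_add' κ κ' := by
    ext x
    simp only [Pi.add_apply, add_mul]
    exact (summable_mul_shift hφ hh κ x).tsum_add (summable_mul_shift hφ hh κ' x)
  map_smul' c κ := by
    ext x
    simp only [Pi.smul_apply, smul_eq_mul, mul_assoc, RingHom.id_apply]
    exact tsum_mul_left

lemma synthesis_apply (hφ : HasCompactSupport φ) (hh : h ≠ 0) (κ : ℤ → ℂ) (x : ℝ) :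
    synthesis hφ hh κ x = ∑' i, κ i * φ (x + i * h) := rfl

lemma translation_synthesis (hφ : HasCompactSupport φ) (hh : h ≠ 0) (κ : ℤ → ℂ) :
    translation h (synthesis hφ hh κ) = synthesis hφ hh (translation (-1) κ) := by
  ext x
  rw [translation_apply, synthesis_apply, synthesis_apply, ← (Equiv.subRight (1 : ℤ)).tsum_eq]
  refine tsum_congr fun i => ?_
  rw [translation_apply, Equiv.subRight_apply, ← sub_eq_add_neg]
  congr 2
  push_cast
  ring

/- Summing by parts moves `Q` onto `κ`; only the indices `0 ≤ r < N` of the result meet the support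
of `W`. -/
lemma sum_mul_aeval_translation_eq_zero (Q : ℂ[X]) {N : ℕ} {W : ℝ → ℂ}
    (hW : ∀ t : ℤ, W (t * h) ≠ 0 → -N < t ∧ t ≤ 0) {κ : ℤ → ℂ}
    (hκ : ∀ r : Fin N, aeval (translation (1 : ℤ)) Q κ r = 0) {F : Finset ℤ}
    (hF : Finset.Ico 0 (Q.natDegree + N : ℤ) ⊆ F) :
    ∑ i ∈ F, κ i * aeval (translation h) Q W (-i * h) = 0 := by
  have sum_shift (e : ℕ) (he : e ∈ Finset.range (Q.natDegree + 1)) :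
      ∑ i ∈ F, κ i * W ((e - i : ℤ) * h) =
        ∑ r : Fin N, κ (r + e) * W (-r * h) := by
    rw [Finset.mem_range] at he
    refine (Finset.sum_of_injOn (fun r : Fin N => (r + e : ℤ)) ?_ ?_ ?_ ?_).symm
    · exact fun r _ r' _ hrr' => Fin.ext (by simpa using hrr')
    · exact fun r _ => hF (by simp; omega)
    · intro i _ hi
      by_contra hne
      obtain ⟨h1, h2⟩ := hW _ (right_ne_zero_of_mul hne)
      refine hi ⟨⟨(i - e).toNat, by omega⟩, by simp, by simp; omega⟩
    · intro r _
      congr 2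
      push_cast
      ring
  calc ∑ i ∈ F, κ i * aeval (translation h) Q W (-i * h)
      = ∑ e ∈ Finset.range (Q.natDegree + 1), Q.coeff e * ∑ i ∈ F, κ i * W ((e - i : ℤ) * h) := by
        simp only [aeval_translation_apply, Finset.mul_sum]
        rw [Finset.sum_comm]
        refine Finset.sum_congr rfl fun e _ => Finset.sum_congr rfl fun i _ => ?_
        rw [nsmul_eq_mul, ← add_mul, mul_left_comm]
        congr 4
        push_cast
        ring
    _ = ∑ r : Fin N, aeval (translation (1 : ℤ)) Q κ r * W (-r * h) := by
        rw [Finset.sum_congr rfl fun e he => by rw [sum_shift e he]]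
        simp only [aeval_translation_apply, Finset.mul_sum, Finset.sum_mul]
        rw [Finset.sum_comm]
        simp [mul_assoc]
    _ = 0 := Finset.sum_eq_zero fun r _ => by rw [hκ r, zero_mul]

end Synthesis

section Periodization

open FourierTransform

lemma norm_fourierCharExt_int_mul_le (n : ℤ) (z : ℂ) :
    ‖fourierCharExt (n * z)‖ ≤ Real.exp (2 * Real.pi * |z.im|) ^ n.natAbs := by
  have norm_eq : ‖fourierCharExt (n * z)‖ = Real.exp (2 * Real.pi * -(n * z.im)) := by
    rw [fourierCharExt, Complex.norm_exp]
    simp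
  rw [norm_eq, ← Real.exp_nat_mul, Nat.cast_natAbs, Int.cast_abs, mul_left_comm, ← abs_mul]
  gcongr
  exact neg_le_abs _

lemma summable_pow_natAbs {r : ℝ} (hr : r ∈ Set.Ioo (0 : ℝ) 1) :
    Summable fun n : ℤ => r ^ n.natAbs := by
  refine .of_nat_of_neg ?_ ?_ <;> simpa using summable_geometric_of_lt_one hr.1.le hr.2

lemma exists_differentiableOn_tsum_mul_fourierCharExt {c : ℤ → ℂ} {B q : ℝ}
    (hq : q ∈ Set.Ioo (0 : ℝ) 1) (hc : ∀ n, ‖c n‖ ≤ B * q ^ n.natAbs) :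
    ∃ δ > 0, DifferentiableOn ℂ (fun z => ∑' n : ℤ, c n * fourierCharExt (n * z))
      {z | |z.im| < δ} := by
  obtain ⟨r, hqr, hr⟩ := exists_between hq.2
  have ratio_pos : 0 < r / q := div_pos (hq.1.trans hqr) hq.1
  refine ⟨Real.log (r / q) / (2 * Real.pi),
    div_pos (Real.log_pos ((one_lt_div hq.1).2 hqr)) Real.two_pi_pos, ?_⟩
  refine Complex.differentiableOn_tsum_of_summable_norm (u := fun n => B * r ^ n.natAbs)
    ((summable_pow_natAbs ⟨hq.1.trans hqr, hr⟩).mul_left B) (fun n => by fun_prop)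
    (isOpen_lt (by fun_prop) continuous_const) fun n z hz => ?_
  have exp_le : Real.exp (2 * Real.pi * |z.im|) ≤ r / q := by
    rw [← Real.le_log_iff_exp_le ratio_pos, ← le_div_iff₀' Real.two_pi_pos]
    exact le_of_lt hz
  calc ‖c n * fourierCharExt (n * z)‖
      ≤ B * q ^ n.natAbs * (r / q) ^ n.natAbs := by
        rw [norm_mul]
        gcongr
        · exact (norm_nonneg _).trans (hc n)
        · exact hc n
        · exact (norm_fourierCharExt_int_mul_le n z).trans (by gcongr)
    _ = B * r ^ n.natAbs := by
        rw [mul_assoc, ← mul_pow, mul_div_cancel₀ r hq.1.ne']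

lemma analyticOnNhd_tsum_mul_fourier {c : ℤ → ℂ} {B q : ℝ}
    (hq : q ∈ Set.Ioo (0 : ℝ) 1) (hc : ∀ n, ‖c n‖ ≤ B * q ^ n.natAbs) :
    AnalyticOnNhd ℝ (fun x : ℝ => ∑' n : ℤ, c n * fourier n (x : UnitAddCircle)) Set.univ := by
  obtain ⟨δ, δ_pos, hdiff⟩ := exists_differentiableOn_tsum_mul_fourierCharExt hq hc
  have isOpen_strip : IsOpen {z : ℂ | |z.im| < δ} := isOpen_lt (by fun_prop) continuous_const
  have fourier_eq (n : ℤ) (x : ℝ) : fourier n (x : UnitAddCircle) = fourierCharExt (n * x) := by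
    rw [fourier_coe_apply, fourierCharExt]
    simp [mul_assoc]
  simp only [fourier_eq]
  intro x _
  have hx : (x : ℂ) ∈ {z : ℂ | |z.im| < δ} := by simpa using δ_pos
  exact (hdiff.analyticAt (isOpen_strip.mem_nhds hx)).restrictScalars.comp_of_eq
    (Complex.ofRealCLM.analyticAt x) rfl

lemma summable_norm_restrict_shift (f : C(ℝ, ℂ)) (hs : HasCompactSupport f)
    (K : TopologicalSpace.Compacts ℝ) :
    Summable fun n : ℤ => ‖(f.comp (ContinuousMap.addRight (n : ℝ))).restrict K‖ := by
  obtain ⟨F, hF⟩ := exists_finset_forall_notMem_eq_zero hs one_ne_zero K.isCompact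
  refine summable_of_ne_finset_zero (s := F) fun n hn => norm_eq_zero.2 (ContinuousMap.ext ?_)
  intro x
  change f (x + n) = 0
  simpa using hF x x.2 n hn

lemma analyticOnNhd_tsum_add_int {f : ℝ → ℂ} (hf : Continuous f) (hs : HasCompactSupport f)
    {B q : ℝ} (hq : q ∈ Set.Ioo (0 : ℝ) 1) (hdecay : ∀ n : ℤ, ‖𝓕 f n‖ ≤ B * q ^ n.natAbs) :
    AnalyticOnNhd ℝ (fun x => ∑' n : ℤ, f (x + n)) Set.univ := by
  have hsum : Summable fun n : ℤ => 𝓕 f n :=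
    .of_norm_bounded ((summable_pow_natAbs hq).mul_left B) hdecay
  have poisson : (fun x => ∑' n : ℤ, f (x + n)) =
      fun x : ℝ => ∑' n : ℤ, 𝓕 f n * fourier n (x : UnitAddCircle) :=
    funext (Real.tsum_eq_tsum_fourier (summable_norm_restrict_shift ⟨f, hf⟩ hs) hsum)
  exact poisson ▸ analyticOnNhd_tsum_mul_fourier hq hdecay

lemma fourier_eq_zero_of_tsum_add_int_eq_zero {f : ℝ → ℂ} (hf : Continuous f)
    (hs : HasCompactSupport f) (h : ∀ x, ∑' n : ℤ, f (x + n) = 0) (m : ℤ) : 𝓕 f m = 0 := by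
  let f' : C(ℝ, ℂ) := ⟨f, hf⟩
  have hsum := summable_norm_restrict_shift f' hs
  have periodization_eq_zero :
      ∑' n : ℤ, f'.comp (ContinuousMap.addRight (n • (1 : ℝ))) = 0 := by
    ext x
    rw [← ContinuousMap.tsum_apply]
    · simpa [f'] using h x
    · simpa using ContinuousMap.summable_of_locally_summable_norm hsum
  have lift_eq_zero : (f'.periodic_tsum_comp_add_zsmul 1).lift = 0 := by
    ext y
    induction y using QuotientAddGroup.induction_on with
    | H y => rw [Function.Periodic.lift_coe, periodization_eq_zero]; rfl
  change 𝓕 (f' : ℝ → ℂ) m = 0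
  rw [← Real.fourierCoeff_tsum_comp_add hsum m, lift_eq_zero]
  simp [fourierCoeff]

end Periodization

section TwistedMoment

open Polynomial FourierTransform

/-- The `k`-th moment, centred at `a`, of the samples of `f` on `x + ℤ` twisted by the character of
frequency `α`. With `a = x` it is the periodization of `modulate f α k`; with `a` fixed it is a
combination of integer translates of `f`. -/
noncomputable def twistedMoment (f : ℝ → ℂ) (α : ℂ) (k : ℕ) (a x : ℝ) : ℂ :=
  ∑' n : ℤ, (a + n : ℝ) ^ k * fourierCharExt (-(α * (a + n : ℝ))) * f (x + n)

variable {f : ℝ → ℂ} (hs : HasCompactSupport f) (α : ℂ)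

lemma twistedMoment_self (f : ℝ → ℂ) (α : ℂ) (k : ℕ) (x : ℝ) :
    twistedMoment f α k x x = ∑' n : ℤ, modulate f α k (x + n) := rfl

include hs

lemma summable_twistedMoment (k : ℕ) (a x : ℝ) : Summable fun n : ℤ =>
    (a + n : ℝ) ^ k * fourierCharExt (-(α * (a + n : ℝ))) * f (x + n) := by
  simpa only [mul_one] using summable_mul_shift hs one_ne_zero
    (fun n => (a + n : ℝ) ^ k * fourierCharExt (-(α * (a + n : ℝ)))) x

lemma twistedMoment_eq_sum (k : ℕ) (a b x : ℝ) : twistedMoment f α k b x =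
    fourierCharExt (-(α * (b - a))) * ∑ i ∈ Finset.range (k + 1),
      ((b - a) ^ (k - i) * k.choose i) * twistedMoment f α i a x := by
  simp only [twistedMoment, ← tsum_mul_left]
  rw [← Summable.tsum_finsetSum fun i _ => (summable_twistedMoment hs α i a x).mul_left _,
    ← tsum_mul_left]
  refine tsum_congr fun n => ?_
  have shift : ((b + n : ℝ) : ℂ) = (a + n : ℝ) + (b - a) := by
    push_cast
    ring
  rw [shift, add_pow, mul_add α, neg_add, fourierCharExt_add, Finset.mul_sum, Finset.sum_mul,
    Finset.sum_mul]
  refine Finset.sum_congr rfl fun i _ => ?_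
  ring

lemma analyticOnNhd_twistedMoment_zero (hf : Continuous f) {d : ℕ} {B q : ℝ}
    (hq : q ∈ Set.Ioo (0 : ℝ) 1)
    (hdecay : ∀ k ≤ d, ∀ n : ℤ, ‖iteratedDeriv k (fourierExt f) (α + n)‖ ≤ B * q ^ n.natAbs)
    {k : ℕ} (hk : k ≤ d) : AnalyticOnNhd ℝ (twistedMoment f α k 0) Set.univ := by
  have fourier_modulate_le (i : ℕ) (hi : i ≤ d) (n : ℤ) :
      ‖𝓕 (modulate f α i) n‖ ≤ B / (2 * Real.pi) ^ i * q ^ n.natAbs := by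
    have bound := hdecay i hi n
    rw [← Complex.ofReal_intCast, iteratedDeriv_fourierExt_add hf hs, norm_mul, norm_pow,
      norm_neg] at bound
    rw [div_mul_eq_mul_div, le_div_iff₀' (by positivity)]
    simpa [abs_of_pos Real.pi_pos] using bound
  have periodization (i : ℕ) (hi : i ≤ d) :
      AnalyticOnNhd ℝ (fun x => twistedMoment f α i x x) Set.univ :=
    analyticOnNhd_tsum_add_int (continuous_modulate hf α i) (hasCompactSupport_modulate hs α i)
      hq (fourier_modulate_le i hi)
  have ofReal : AnalyticOnNhd ℝ (fun x : ℝ => (x : ℂ)) Set.univ :=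
    fun x _ => Complex.ofRealCLM.analyticAt x
  have sub : AnalyticOnNhd ℝ (fun x : ℝ => ((0 : ℝ) - x : ℂ)) Set.univ :=
    analyticOnNhd_const.sub ofReal
  rw [funext fun x => twistedMoment_eq_sum hs α k x 0 x]
  refine .mul (fun x hx => ?_) (Finset.analyticOnNhd_fun_sum _ fun i hi =>
    ((sub.pow _).mul analyticOnNhd_const).mul
      (periodization i ((Finset.mem_range_succ_iff.1 hi).trans hk)))
  exact (differentiable_fourierCharExt.analyticAt _).restrictScalars.comp_of_eq
    ((analyticOnNhd_const.mul sub).neg x hx) rfl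

lemma iteratedDeriv_fourierExt_eq_zero_of_twistedMoment_eq_zero (hf : Continuous f) {d : ℕ}
    (h : ∀ k ≤ d, twistedMoment f α k 0 = 0) {k : ℕ} (hk : k ≤ d) (ℓ : ℤ) :
    iteratedDeriv k (fourierExt f) (α + ℓ) = 0 := by
  rw [← Complex.ofReal_intCast, iteratedDeriv_fourierExt_add hf hs,
    fourier_eq_zero_of_tsum_add_int_eq_zero (continuous_modulate hf α k)
      (hasCompactSupport_modulate hs α k), mul_zero]
  intro x
  rw [← twistedMoment_self, twistedMoment_eq_sum hs α k 0 x x, Finset.sum_eq_zero, mul_zero]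
  intro i hi
  rw [h i ((Finset.mem_range_succ_iff.1 hi).trans hk), Pi.zero_apply, mul_zero]

lemma twistedMoment_aeval_translation (P : ℂ[X]) (h : ℝ) (k : ℕ) (a : ℝ) :
    twistedMoment (aeval (translation h) P f) α k a =
      aeval (translation h) P (twistedMoment f α k a) := by
  ext x
  simp only [aeval_translation_apply, twistedMoment, ← tsum_mul_left, Finset.mul_sum]
  rw [← Summable.tsum_finsetSum fun m _ => (summable_twistedMoment hs α k a _).mul_left _]
  refine tsum_congr fun n => Finset.sum_congr rfl fun m _ => ?_
  rw [add_right_comm]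
  ring

lemma twistedMoment_mem_range_synthesis {h : ℝ} (hh : h ≠ 0) {M : ℤ} (hM : M * h = 1) (k : ℕ)
    (a : ℝ) : twistedMoment f α k a ∈ LinearMap.range (synthesis hs hh) := by
  have M_ne : M ≠ 0 := by
    rintro rfl
    simp at hM
  have mul_injective : Function.Injective fun n : ℤ => n * M := mul_left_injective₀ M_ne
  let κ (n : ℤ) : ℂ := (a + n : ℝ) ^ k * fourierCharExt (-(α * (a + n : ℝ)))
  refine ⟨Function.extend (fun n => n * M) κ 0, funext fun x => ?_⟩
  rw [synthesis_apply, ← mul_injective.tsum_eq]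
  · refine tsum_congr fun n => ?_
    rw [mul_injective.extend_apply, Int.cast_mul, mul_assoc (n : ℝ), hM, mul_one]
  · intro i hi
    by_contra hmem
    exact hi (by simp only [Function.extend_apply' _ _ _ hmem, Pi.zero_apply, zero_mul])

end TwistedMoment

section Counting

open Polynomial

lemma analyticOrderAt_eval_comp {χ : ℂ[X]} (hχ : χ ≠ 0) {e : ℂ → ℂ} {z : ℂ}
    (he : AnalyticAt ℂ e z) (he' : deriv e z ≠ 0) :
    analyticOrderAt (fun w => χ.eval (e w)) z = χ.rootMultiplicity (e z) := by
  obtain ⟨g, hg, not_dvd⟩ := exists_eq_pow_rootMultiplicity_mul_and_not_dvd χ hχ (e z)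
  rw [dvd_iff_isRoot] at not_dvd
  have factor : (fun w => χ.eval (e w)) =
      (fun w => e w - e z) ^ χ.rootMultiplicity (e z) * fun w => g.eval (e w) := by
    ext w
    conv_lhs => rw [hg]
    simp
  have sub_analytic : AnalyticAt ℂ (fun w => e w - e z) z := he.sub analyticAt_const
  have g_analytic : AnalyticAt ℂ (fun w => g.eval (e w)) z :=
    (g.differentiable.analyticAt _).comp he
  rw [factor, analyticOrderAt_mul (sub_analytic.pow _) g_analytic,
    analyticOrderAt_pow sub_analytic, he.analyticOrderAt_sub_eq_one_of_deriv_ne_zero he',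
    g_analytic.analyticOrderAt_eq_zero.2 not_dvd]
  simp

lemma lt_rootMultiplicity_add_of_iteratedDeriv_eq_zero {χ : ℂ[X]} (hχ : χ ≠ 0) {e f : ℂ → ℂ}
    {z : ℂ} (he : AnalyticAt ℂ e z) (he' : deriv e z ≠ 0) (hf : AnalyticAt ℂ f z) {d k : ℕ}
    (h : ∀ i ≤ d, iteratedDeriv i (fun w => χ.eval (e w) * f w) z = 0)
    (hk : iteratedDeriv k f z ≠ 0) : d < χ.rootMultiplicity (e z) + k := by
  have χe_analytic : AnalyticAt ℂ (fun w => χ.eval (e w)) z :=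
    (χ.differentiable.analyticAt _).comp he
  have order_f : analyticOrderAt f z ≤ k := by
    by_contra! lt
    exact hk ((natCast_le_analyticOrderAt_iff_iteratedDeriv_eq_zero hf (n := k + 1)).1
      (by exact_mod_cast Order.add_one_le_of_lt lt) k k.lt_succ_self)
  have le_order := (natCast_le_analyticOrderAt_iff_iteratedDeriv_eq_zero
    (χe_analytic.mul hf) (n := d + 1)).2 fun i hi => h i (Nat.lt_succ_iff.1 hi)
  rw [analyticOrderAt_mul χe_analytic hf, analyticOrderAt_eval_comp hχ he he'] at le_order
  exact_mod_cast le_order.trans (add_le_add_right order_f _)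

lemma sum_rootMultiplicity_le_natDegree {R : Type*} [CommRing R] [IsDomain R] (χ : R[X])
    (s : Finset R) : ∑ a ∈ s, χ.rootMultiplicity a ≤ χ.natDegree := by
  classical
  calc ∑ a ∈ s, χ.rootMultiplicity a
      ≤ ∑ a ∈ s ∪ χ.roots.toFinset, χ.roots.count a := by
        simp only [count_roots]
        exact Finset.sum_le_sum_of_subset Finset.subset_union_left
    _ = χ.roots.card := Multiset.sum_count_eq_card fun a ha =>
        Finset.mem_union_right _ (Multiset.mem_toFinset.2 ha)
    _ ≤ χ.natDegree := χ.card_roots'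

lemma card_le_natDegree_of_lt_rootMultiplicity_add {R ι : Type*} [CommRing R] [IsDomain R]
    [DecidableEq ι] (χ : R[X]) {d : ℕ} (t : Finset (ℕ × ι)) {a : ι → R}
    (ha : Set.InjOn a (t.image Prod.snd)) (hd : ∀ x ∈ t, x.1 ≤ d)
    (h : ∀ x ∈ t, d < χ.rootMultiplicity (a x.2) + x.1) : t.card ≤ χ.natDegree := by
  classical
  have fiber (b : R) : (t.filter fun x => a x.2 = b).card ≤ χ.rootMultiplicity b := by
    have maps_to : ∀ x ∈ t.filter fun x => a x.2 = b,
        x.1 ∈ Finset.Ico (d + 1 - χ.rootMultiplicity b) (d + 1) := by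
      intro x hx
      obtain ⟨hxt, rfl⟩ := Finset.mem_filter.1 hx
      have := hd x hxt
      have := h x hxt
      rw [Finset.mem_Ico]
      lia
    have injOn : Set.InjOn Prod.fst (t.filter fun x => a x.2 = b : Set (ℕ × ι)) := by
      rintro x hx y hy hxy
      rw [Finset.mem_coe, Finset.mem_filter] at hx hy
      exact Prod.ext hxy (ha (Finset.mem_image_of_mem _ hx.1) (Finset.mem_image_of_mem _ hy.1)
        (hx.2.trans hy.2.symm))
    have := Finset.card_le_card_of_injOn Prod.fst maps_to injOn
    rw [Nat.card_Ico] at this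
    lia
  calc t.card = ∑ b ∈ t.image fun x => a x.2, (t.filter fun x => a x.2 = b).card :=
        Finset.card_eq_sum_card_image _ t
    _ ≤ ∑ b ∈ t.image fun x => a x.2, χ.rootMultiplicity b :=
        Finset.sum_le_sum fun b _ => fiber b
    _ ≤ χ.natDegree := sum_rootMultiplicity_le_natDegree χ _

lemma finite_and_ncard_le_of_forall_finset {β : Type*} {S : Set β} {N : ℕ}
    (h : ∀ t : Finset β, (t : Set β) ⊆ S → t.card ≤ N) : S.Finite ∧ S.ncard ≤ N := by
  have finite : S.Finite := by
    by_contra infinite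
    obtain ⟨t, htS, card_eq⟩ := Set.Infinite.exists_subset_card_eq infinite (N + 1)
    have := h t htS
    lia
  refine ⟨finite, ?_⟩
  rw [Set.ncard_eq_toFinset_card S finite]
  exact h _ finite.coe_toFinset.subset

lemma exists_two_pow_injOn_fourierCharExt (α : ℂ) (s : Finset ℤ) :
    ∃ j : ℕ, Set.InjOn (fun ℓ : ℤ => fourierCharExt ((1 / 2 ^ j : ℝ) * (α + ℓ))) s := by
  obtain ⟨B, hB⟩ := (s.image Int.natAbs).exists_le
  refine ⟨2 * B, fun ℓ hℓ ℓ' hℓ' heq => ?_⟩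
  obtain ⟨n, hn⟩ := exists_int_eq_of_fourierCharExt_eq heq
  have sub_eq : ℓ - ℓ' = n * 2 ^ (2 * B) := by
    have : (ℓ - ℓ' : ℂ) = n * 2 ^ (2 * B) := by
      push_cast at hn
      field_simp at hn
      linear_combination hn
    exact_mod_cast this
  have abs_lt : |ℓ - ℓ'| < 2 ^ (2 * B) := by
    have := hB _ (Finset.mem_image_of_mem _ hℓ)
    have := hB _ (Finset.mem_image_of_mem _ hℓ')
    have : (2 * B : ℤ) < 2 ^ (2 * B) := by exact_mod_cast Nat.lt_two_pow_self (n := 2 * B)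
    rw [abs_lt]
    lia
  exact sub_eq_zero.1 (Int.eq_zero_of_abs_lt_dvd ⟨n, sub_eq.trans (mul_comm _ _)⟩ abs_lt)

end Counting

section Annihilation

open Polynomial Filter Topology

lemma eq_zero_of_forall_integral_contDiff_mul_eq_zero {f : ℝ → ℂ}
    (hf : AnalyticOnNhd ℝ f Set.univ) {a b : ℝ} (hab : a < b)
    (h : ∀ ψ : ℝ → ℂ, ContDiff ℝ (⊤ : ℕ∞) ψ → HasCompactSupport ψ →
      Function.support ψ ⊆ Set.Ioo a b → ∫ x, ψ x * f x = 0) : f = 0 := by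
  have hfc : Continuous f := continuousOn_univ.1 hf.continuousOn
  have ae_zero : ∀ᵐ x, x ∈ Set.Ioo a b → f x = 0 := by
    refine isOpen_Ioo.ae_eq_zero_of_integral_contDiff_smul_eq_zero
      (hfc.locallyIntegrable.locallyIntegrableOn _) fun g hg hgs hgt => ?_
    simp only [Complex.real_smul]
    refine h (fun x => (g x : ℂ)) (Complex.ofRealCLM.contDiff.comp hg)
      (hgs.comp_left Complex.ofReal_zero) fun x hx => hgt (subset_tsupport g ?_)
    simpa using hx
  have eqOn_zero : Set.EqOn f 0 (Set.Ioo a b) := by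
    refine Measure.eqOn_open_of_ae_eq (μ := volume) ?_ isOpen_Ioo hfc.continuousOn
      continuousOn_const
    rwa [EventuallyEq, ae_restrict_iff' measurableSet_Ioo]
  obtain ⟨x, hx⟩ := Set.nonempty_Ioo.2 hab
  exact hf.eq_of_eventuallyEq analyticOnNhd_const
    (eqOn_zero.eventuallyEq_of_mem (Ioo_mem_nhds hx.1 hx.2))

lemma neg_lt_and_nonpos_of_aeval_translation_ne_zero {P : ℂ[X]} {N M : ℕ}
    (hP : P.natDegree ≤ N * M) {δ h : ℝ} (hδ : 0 < δ) (hh : h = M * δ) {ψ : ℝ → ℂ}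
    (hψ : Function.support ψ ⊆ Set.Ioo 0 h) {t : ℤ}
    (ht : aeval (translation δ) P ψ (t * h) ≠ 0) : -N < t ∧ t ≤ 0 := by
  rw [aeval_translation_apply] at ht
  obtain ⟨m, hm, hne⟩ := Finset.exists_ne_zero_of_sum_ne_zero ht
  have hmem := hψ (right_ne_zero_of_mul hne)
  rw [hh, nsmul_eq_mul, ← mul_assoc, ← add_mul] at hmem
  have lower : 0 < t * M + m := by exact_mod_cast pos_of_mul_pos_left hmem.1 hδ.le
  have upper : t * M + m < M := by exact_mod_cast lt_of_mul_lt_mul_right hmem.2 hδ.le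
  have m_le : (m : ℤ) ≤ N * M := by
    rw [Finset.mem_range] at hm
    exact_mod_cast (Nat.lt_succ_iff.1 hm).trans hP
  constructor <;> by_contra! <;> nlinarith

variable {φ : ℝ → ℂ}

lemma exists_finset_integral_mul_synthesis_eq {h : ℝ} (hφc : Continuous φ)
    (hφ : HasCompactSupport φ) (hh : h ≠ 0) {ψ : ℝ → ℂ} (hψ : Continuous ψ)
    (hψs : HasCompactSupport ψ) : ∃ F : Finset ℤ, ∀ F' : Finset ℤ, F ⊆ F' → ∀ κ : ℤ → ℂ,
      ∫ x, ψ x * synthesis hφ hh κ x = ∑ i ∈ F', κ i * ∫ y, φ y * ψ (-i * h + y) := by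
  obtain ⟨F, hF⟩ := exists_finset_forall_tsum_eq_sum hφ hh hψs.isCompact
  refine ⟨F, fun F' hF' κ => ?_⟩
  have integrand (x : ℝ) : ψ x * synthesis hφ hh κ x =
      ∑ i ∈ F', κ i * (φ (x + i * h) * ψ x) := by
    by_cases hx : x ∈ tsupport ψ
    · rw [synthesis_apply, hF F' hF' x hx, Finset.mul_sum]
      exact Finset.sum_congr rfl fun i _ => by ring
    · simp [image_eq_zero_of_notMem_tsupport hx]
  simp only [integrand]
  rw [integral_finsetSum F' fun i _ => (by fun_prop : Continuous fun x : ℝ =>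
    κ i * (φ (x + i * h) * ψ x)).integrable_of_hasCompactSupport hψs.mul_left.mul_left]
  refine Finset.sum_congr rfl fun i _ => ?_
  rw [integral_const_mul, ← integral_add_right_eq_self (fun y => φ y * ψ (-i * h + y)) (i * h)]
  congr! 4
  ring_nf

variable {p : ℕ → ℂ[X]} {N : ℕ} (hN : ∀ i, (p i).natDegree ≤ N) {C : ℝ}
  (hC : ∀ i, ∀ z : ℂ, ‖z‖ = 1 → ‖(p i).eval z‖ ≤ C) (hone : ∀ i, (p i).eval 1 = 1)
  (hφc : Continuous φ) (hφ : HasCompactSupport φ)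
  (hprod : ∀ z : ℂ, Tendsto
    (fun J => ∏ i ∈ Finset.range J, (p i).eval (fourierCharExt (-z / 2 ^ (i + 1))))
    atTop (𝓝 (fourierExt φ z)))
  {j : ℕ}

include hN hC hone hφc hφ hprod

lemma sum_mul_integral_eq_zero {κ : ℤ → ℂ}
    (hκ : ∀ r : Fin N, aeval (translation (1 : ℤ)) (cascade p j) κ r = 0) {F : Finset ℤ}
    (hF : Finset.Ico 0 ((cascade p j).natDegree + N : ℤ) ⊆ F) {ψ : ℝ → ℂ}
    (hψ : ContDiff ℝ (⊤ : ℕ∞) ψ) (hψs : HasCompactSupport ψ)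
    (hψ_support : Function.support ψ ⊆ Set.Ioo 0 (1 / 2 ^ j)) :
    ∑ i ∈ F, κ i * ∫ y, φ y * ψ (-i * (1 / 2 ^ j) + y) = 0 := by
  have limit : Tendsto (fun J => ∑ i ∈ F, κ i *
      aeval (translation (1 / 2 ^ (j + J))) (cascade p (j + J)) ψ (-i * (1 / 2 ^ j))) atTop
      (𝓝 (∑ i ∈ F, κ i * ∫ y, φ y * ψ (-i * (1 / 2 ^ j) + y))) :=
    tendsto_finsetSum F fun i _ => ((tendsto_aeval_translation_cascade hN hC hone
      (hφc.integrable_of_hasCompactSupport hφ) hprod hψ hψs _).comp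
      (tendsto_add_atTop_nat j |>.congr fun J => add_comm J j)).const_mul _
  refine tendsto_nhds_unique limit (tendsto_const_nhds.congr fun J => ?_)
  rw [aeval_translation_cascade_add]
  refine (sum_mul_aeval_translation_eq_zero _ (fun t => ?_) hκ hF).symm
  refine neg_lt_and_nonpos_of_aeval_translation_ne_zero (M := 2 ^ J)
    ((Nat.le_add_right _ N).trans (natDegree_cascade_add_le (fun i => hN (j + i)) J))
    (by positivity) ?_ hψ_support
  push_cast
  rw [pow_add]
  field_simp

/- Every analytic function in the shift-invariant space is determined by `N` linear functionals of
its coefficients. -/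
lemma synthesis_eq_zero_of_analyticOnNhd (hh : (1 / 2 ^ j : ℝ) ≠ 0) {κ : ℤ → ℂ}
    (han : AnalyticOnNhd ℝ (synthesis hφ hh κ) Set.univ)
    (hκ : ∀ r : Fin N, aeval (translation (1 : ℤ)) (cascade p j) κ r = 0) :
    synthesis hφ hh κ = 0 := by
  refine eq_zero_of_forall_integral_contDiff_mul_eq_zero han
    (by positivity : (0 : ℝ) < 1 / 2 ^ j) fun ψ hψ hψs hψ_support => ?_
  obtain ⟨F, hF⟩ := exists_finset_integral_mul_synthesis_eq hφc hφ hh hψ.continuous hψs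
  rw [hF _ Finset.subset_union_left]
  exact sum_mul_integral_eq_zero hN hC hone hφc hφ hprod hκ Finset.subset_union_right hψ hψs
    hψ_support

lemma exists_monic_aeval_translation_eq_zero (hh : (1 / 2 ^ j : ℝ) ≠ 0) :
    ∃ χ : ℂ[X], χ.Monic ∧ χ.natDegree ≤ N ∧
      ∀ f ∈ LinearMap.range (synthesis hφ hh), AnalyticOnNhd ℝ f Set.univ →
        aeval (translation (1 / 2 ^ j)) χ f = 0 := by
  let analytic : Submodule ℂ (ℝ → ℂ) :=
    { carrier := {f | AnalyticOnNhd ℝ f Set.univ}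
      add_mem' := AnalyticOnNhd.add
      zero_mem' := analyticOnNhd_const
      smul_mem' := fun c f hf => analyticOnNhd_const.mul hf }
  let E := LinearMap.range (synthesis hφ hh) ⊓ analytic
  have translation_mem : ∀ f ∈ E, translation (1 / 2 ^ j) f ∈ E := by
    rintro _ ⟨⟨κ, rfl⟩, han⟩
    refine ⟨⟨_, (translation_synthesis hφ hh κ).symm⟩, fun x _ => ?_⟩
    exact (han (x + 1 / 2 ^ j) trivial).comp_of_eq (analyticAt_id.add analyticAt_const) rfl
  obtain ⟨_, finrank_le⟩ := finiteDimensional_and_finrank_le_of_forall_eq_zero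
    (synthesis hφ hh)
    (LinearMap.funLeft ℂ ℂ (fun r : Fin N => (r : ℤ)) ∘ₗ
      aeval (translation (1 : ℤ)) (cascade p j))
    (inf_le_left : E ≤ _) fun κ hκE hκ =>
      synthesis_eq_zero_of_analyticOnNhd hN hC hone hφc hφ hprod hh hκE.2 (congrFun hκ)
  obtain ⟨χ, monic, degree, hχ⟩ := exists_monic_aeval_eq_zero_of_mapsTo _ E translation_mem
  refine ⟨χ, monic, ?_, fun f hf han => hχ f ⟨hf, han⟩⟩
  rwa [degree, ← Module.finrank_fin_fun ℂ (n := N)]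

lemma exists_monic_iteratedDeriv_eq_zero (α : ℂ) {d : ℕ} {B q : ℝ} (hq : q ∈ Set.Ioo (0 : ℝ) 1)
    (hdecay : ∀ k ≤ d, ∀ ℓ : ℤ, ‖iteratedDeriv k (fourierExt φ) (α + ℓ)‖ ≤ B * q ^ ℓ.natAbs)
    (j : ℕ) : ∃ χ : ℂ[X], χ.Monic ∧ χ.natDegree ≤ N ∧ ∀ k ≤ d, ∀ ℓ : ℤ, iteratedDeriv k
      (fun w => χ.eval (fourierCharExt ((1 / 2 ^ j : ℝ) * w)) * fourierExt φ w) (α + ℓ) = 0 := by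
  have hh : (1 / 2 ^ j : ℝ) ≠ 0 := by positivity
  obtain ⟨χ, monic, degree, hχ⟩ :=
    exists_monic_aeval_translation_eq_zero hN hC hone hφc hφ hprod hh
  have moments_eq_zero (k : ℕ) (hk : k ≤ d) :
      twistedMoment (aeval (translation (1 / 2 ^ j)) χ φ) α k 0 = 0 := by
    rw [twistedMoment_aeval_translation hφ]
    exact hχ _ (twistedMoment_mem_range_synthesis hφ α hh (M := 2 ^ j)
      (by push_cast; field_simp) k 0) (analyticOnNhd_twistedMoment_zero hφ α hφc hq hdecay hk)
  refine ⟨χ, monic, degree, fun k hk ℓ => ?_⟩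
  rw [← funext (fourierExt_aeval_translation χ (1 / 2 ^ j) hφc hφ)]
  exact iteratedDeriv_fourierExt_eq_zero_of_twistedMoment_eq_zero
    (hasCompactSupport_aeval_translation χ _ hφ) α (continuous_aeval_translation χ _ hφc)
    moments_eq_zero hk ℓ

lemma card_le_of_iteratedDeriv_fourierExt_ne_zero (α : ℂ) {d : ℕ} {B q : ℝ}
    (hq : q ∈ Set.Ioo (0 : ℝ) 1)
    (hdecay : ∀ k ≤ d, ∀ ℓ : ℤ, ‖iteratedDeriv k (fourierExt φ) (α + ℓ)‖ ≤ B * q ^ ℓ.natAbs)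
    (t : Finset (ℕ × ℤ))
    (ht : ∀ x ∈ t, x.1 ≤ d ∧ iteratedDeriv x.1 (fourierExt φ) (α + x.2) ≠ 0) : t.card ≤ N := by
  obtain ⟨j, injOn⟩ := exists_two_pow_injOn_fourierCharExt α (t.image Prod.snd)
  obtain ⟨χ, monic, degree, hχ⟩ :=
    exists_monic_iteratedDeriv_eq_zero hN hC hone hφc hφ hprod α hq hdecay j
  refine (card_le_natDegree_of_lt_rootMultiplicity_add χ t injOn
    (fun x hx => (ht x hx).1) fun x hx => ?_).trans degree
  let e (w : ℂ) : ℂ := fourierCharExt ((1 / 2 ^ j : ℝ) * w)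
  have e_deriv : deriv e (α + x.2) ≠ 0 := by
    have he : HasDerivAt e _ (α + x.2) :=
      (hasDerivAt_fourierCharExt _).comp _ ((hasDerivAt_id _).const_mul _)
    rw [he.deriv]
    simp [fourierCharExt_ne_zero, Real.pi_ne_zero]
  exact lt_rootMultiplicity_add_of_iteratedDeriv_eq_zero monic.ne_zero (e := e)
    ((by fun_prop : Differentiable ℂ e).analyticAt _) e_deriv
    ((differentiable_fourierExt hφc hφ).analyticAt _) (fun k hk => hχ k hk x.2) (ht x hx).2

end Annihilation

section Mask

open Polynomial Filter Topology

/-- The polynomial `∑ m ≤ N, c_m X^m`, whose value at `e^{-2πiy}` is the trigonometric polynomial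
with coefficients `c`. -/
noncomputable def maskPolynomial (N : ℕ) (c : ℕ → ℂ) : ℂ[X] :=
  ∑ m ∈ Finset.range (N + 1), monomial m (c m)

lemma natDegree_maskPolynomial_le (N : ℕ) (c : ℕ → ℂ) : (maskPolynomial N c).natDegree ≤ N :=
  natDegree_sum_le_of_forall_le _ _ fun _ hm =>
    (natDegree_monomial_le _).trans (Finset.mem_range_succ_iff.1 hm)

lemma eval_maskPolynomial_fourierCharExt_neg (N : ℕ) (c : ℕ → ℂ) (y : ℂ) :
    (maskPolynomial N c).eval (fourierCharExt (-y)) =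
      ∑ m ∈ Finset.range (N + 1), c m * Complex.exp (-(2 * Real.pi * Complex.I * m * y)) := by
  simp only [maskPolynomial, eval_finsetSum, eval_monomial, ← fourierCharExt_nat_mul]
  refine Finset.sum_congr rfl fun m _ => ?_
  rw [fourierCharExt]
  ring_nf

lemma exists_fourierCharExt_neg_eq_of_norm_eq_one {z : ℂ} (hz : ‖z‖ = 1) :
    ∃ y : ℝ, fourierCharExt (-y) = z := by
  obtain ⟨θ, rfl⟩ := (Complex.norm_eq_one_iff z).1 hz
  refine ⟨-θ / (2 * Real.pi), ?_⟩
  rw [fourierCharExt]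
  congr 1
  push_cast
  field_simp

lemma tendsto_prod_range_of_tendsto_prod_Icc {A : ℕ → ℂ → ℂ} {z l : ℂ}
    (h : Tendsto (fun J : ℕ => ∏ j ∈ Finset.Icc 1 J, A j ((2 : ℂ) ^ (-(j : ℤ)) * z)) atTop (𝓝 l)) :
    Tendsto (fun J => ∏ i ∈ Finset.range J, A (i + 1) (z / 2 ^ (i + 1))) atTop (𝓝 l) := by
  refine h.congr fun J => ?_
  rw [← Finset.Ico_add_one_right_eq_Icc, Finset.prod_Ico_eq_prod_range, Nat.add_sub_cancel]
  refine Finset.prod_congr rfl fun i _ => ?_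
  rw [add_comm 1 i, zpow_neg, zpow_natCast, inv_mul_eq_div]

end Mask

/-- Let `a_j` be trigonometric polynomials of degree ≤ N with `a_j(0) = 1` and
`sup_ℝ |a_j| ≤ C`, and let `φ̂(z) = Π_{j=1}^∞ a_j(2^{−j}z)`. If for some `d ≤ N` the sequences
`ℓ ↦ φ̂^{(k)}(α+ℓ)`, `k = 0,…,d`, decay exponentially, then
`{(k,ℓ) : 0 ≤ k ≤ d, ℓ ∈ ℤ, φ̂^{(k)}(α+ℓ) ≠ 0}` has at most `N` elements. -/
theorem stmt_16 (N : ℕ) (C : ℝ) (hC : 0 < C)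
    (coef : ℕ → ℕ → ℂ) (A : ℕ → ℂ → ℂ)
    (hA : ∀ j : ℕ, ∀ y : ℂ, A j y =
      ∑ m ∈ Finset.range (N + 1), coef j m * Complex.exp (-(2 * (Real.pi : ℂ) * Complex.I * (m : ℂ) * y)))
    (hA0 : ∀ j : ℕ, A j 0 = 1)
    (hAbd : ∀ j : ℕ, ∀ y : ℝ, ‖A j ((y : ℂ))‖ ≤ C)
    (φ : ℝ → ℂ) (hcont : Continuous φ) (hint : Integrable φ) (hsupp : HasCompactSupport φ)
    (hprod : ∀ z : ℂ, Filter.Tendsto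
      (fun J : ℕ => ∏ j ∈ Finset.Icc 1 J, A j ((2 : ℂ) ^ (-(j : ℤ)) * z))
      Filter.atTop (nhds (fourierExt φ z)))
    (α : ℂ) (d : ℕ) (hd : d ≤ N)
    (C' : ℝ) (hC' : 0 < C') (q : ℝ) (hq : q ∈ Set.Ioo (0 : ℝ) 1)
    (hdecay : ∀ k ≤ d, ∀ ℓ : ℤ,
      ‖iteratedDeriv k (fourierExt φ) (α + (ℓ : ℂ))‖ ≤ C' * q ^ ℓ.natAbs) :
    ({x : ℕ × ℤ | x.1 ≤ d ∧ iteratedDeriv x.1 (fourierExt φ) (α + (x.2 : ℂ)) ≠ 0}).Finite ∧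
      ({x : ℕ × ℤ | x.1 ≤ d ∧ iteratedDeriv x.1 (fourierExt φ) (α + (x.2 : ℂ)) ≠ 0}).ncard ≤ N := by
  have mask (i : ℕ) (y : ℂ) :
      (maskPolynomial N (coef (i + 1))).eval (fourierCharExt (-y)) = A (i + 1) y :=
    (eval_maskPolynomial_fourierCharExt_neg N _ y).trans (hA _ y).symm
  refine finite_and_ncard_le_of_forall_finset fun t ht => ?_
  refine card_le_of_iteratedDeriv_fourierExt_ne_zero (p := fun i => maskPolynomial N (coef (i + 1)))
    (fun i => natDegree_maskPolynomial_le N _) (C := C) (fun i z hz => ?_) (fun i => ?_) hcont hsupp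
    (fun z => ?_) α hq hdecay t ht
  · obtain ⟨y, rfl⟩ := exists_fourierCharExt_neg_eq_of_norm_eq_one hz
    rw [mask]
    exact hAbd _ y
  · simpa [hA0] using mask i 0
  · simp only [neg_div, mask]
    exact tendsto_prod_range_of_tendsto_prod_Icc (hprod z)
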